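/- Let σ be a relational first-order language and let M be a countable σ-structure. Then M is HE-homogeneous if and only if M has both the HH-extension property (HHEP) and the following anti-HH-extension property: for every finite σ-structure B in Age(M), every substructure A of B, every finite substructure A' of M, and every surjective homomorphism h : A' → A, there exist a finite substructure B' of M containing A' and a surjective homomorphism h' : B' → B such that h' agrees with h on A' and h' maps every element of B' \ A' into B \ A. -/

import Mathlib

open FirstOrder Language Structure

universe u v w

variable {L : FirstOrder.Language.{u, v}}

/-- `M` is HE-homogeneous: every homomorphism between finite substructures of `M`
extends to a surjective endomorphism of `M`. -/
def IsHEHomogeneous (L : FirstOrder.Language.{u, v}) (M : Type w) [L.Structure M] : Prop :=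
  ∀ (A B : L.Substructure M), (A : Set M).Finite → (B : Set M).Finite →
    ∀ f : A →[L] B, ∃ g : M →[L] M, Function.Surjective g ∧ ∀ a : A, g (a : M) = (f a : M)

/-- `M` has the HH-extension property. -/
def HasHHEP (L : FirstOrder.Language.{u, v}) (M : Type w) [L.Structure M] : Prop :=
  ∀ (B : Type w) [L.Structure B], Finite B → Nonempty (B ↪[L] M) →
    ∀ (A : L.Substructure B) (f : A →[L] M), ∃ g : B →[L] M, ∀ a : A, g (a : B) = f a

/-- `M` has the anti-HH-extension property: for every finite structure `B` in the age of `M`,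
every substructure `A` of `B`, every finite substructure `A'` of `M` and every surjective
homomorphism `h : A' → A`, there are a finite substructure `B'` of `M` containing `A'` and a
surjective homomorphism `h' : B' → B` agreeing with `h` on `A'` and mapping `B' \ A'`
into `B \ A`. -/
def HasAntiHHEP (L : FirstOrder.Language.{u, v}) (M : Type w) [L.Structure M] : Prop :=
  ∀ (B : Type w) [L.Structure B], Finite B → Nonempty (B ↪[L] M) →
    ∀ (A : L.Substructure B) (A' : L.Substructure M), (A' : Set M).Finite →
      ∀ h : A' →[L] A, Function.Surjective h →
        ∃ (B' : L.Substructure M) (_ : (B' : Set M).Finite) (hle : A' ≤ B')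
          (h' : B' →[L] B), Function.Surjective h' ∧
            (∀ a : A', h' ⟨(a : M), hle a.2⟩ = (h a : B)) ∧
            (∀ b : B', (b : M) ∉ A' → h' b ∉ A)

/-!
An epimorphism extending a given finite partial homomorphism provides both extension properties:
restricting it gives the HHEP, and pulling points back along it gives the anti-HHEP. Conversely,
order the finite partial endomorphisms of `M` by extension. The HHEP says that those defined at a
given point are cofinal, the anti-HHEP that those attaining a given value are. As `M` is countable,
the Rasiowa–Sikorski lemma produces a chain meeting all of these cofinal sets, and the union of the
chain is an epimorphism.
-/

open Order Substructure

section

variable {M N : Type*} [L.Structure M] [L.Structure N]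

/-- A structure is locally finite if its finitely generated substructures are finite. This is the
generality in which finite partial homomorphisms can be extended one point at a time. -/
def IsLocallyFinite (L : FirstOrder.Language.{u, v}) (M : Type*) [L.Structure M] : Prop :=
  ∀ ⦃S : L.Substructure M⦄, S.FG → Finite S

theorem isLocallyFinite_of_isRelational [L.IsRelational] : IsLocallyFinite L M :=
  fun _ => FG.finite

theorem IsLocallyFinite.finite_sup_closure_singleton (hM : IsLocallyFinite L M)
    (S : L.Substructure M) [Finite S] (m : M) : Finite ↥(S ⊔ closure L {m}) :=
  hM (FG.of_finite.sup (fg_closure_singleton m))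

theorem finite_range_hom [Finite M] (f : M →[L] N) : Finite f.range :=
  Set.finite_range f

theorem exists_hom_lift_of_forall_mem_range {P : Type*} [L.Structure P] (e : M ↪[L] N)
    (g : P →[L] N) (hg : ∀ x, g x ∈ e.toHom.range) : ∃ h : P →[L] M, ∀ x, e (h x) = g x := by
  refine ⟨e.equivRange.symm.toHom.comp (g.codRestrict _ hg), fun x => ?_⟩
  exact congrArg Subtype.val (e.equivRange.apply_symm_apply ⟨g x, hg x⟩)

end

/-- A partial homomorphism from `M` to `N`: a homomorphism to `N` from a substructure of `M`.
The order is extension. -/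
structure PartialHom (L : FirstOrder.Language.{u, v}) (M N : Type*) [L.Structure M]
    [L.Structure N] where
  dom : L.Substructure M
  toHom : dom →[L] N

namespace PartialHom

variable {M N : Type*} [L.Structure M] [L.Structure N]

instance : Preorder (PartialHom L M N) where
  le f g := ∃ h : f.dom ≤ g.dom, ∀ x : f.dom, g.toHom (inclusion h x) = f.toHom x
  le_refl _ := ⟨le_rfl, fun _ => rfl⟩
  le_trans _ _ _ := fun ⟨hfg, hfg'⟩ ⟨hgk, hgk'⟩ =>
    ⟨hfg.trans hgk, fun x => (hgk' (inclusion hfg x)).trans (hfg' x)⟩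

theorem dom_mono : Monotone (dom : PartialHom L M N → L.Substructure M) :=
  fun _ _ h => h.1

theorem range_mono : Monotone fun f : PartialHom L M N => f.toHom.range := by
  rintro f g ⟨hdom, hfg⟩ _ ⟨x, rfl⟩
  exact ⟨inclusion hdom x, hfg x⟩

theorem toHom_apply_of_le {f g : PartialHom L M N} (h : f ≤ g) {x : M} (hf : x ∈ f.dom)
    (hg : x ∈ g.dom) : g.toHom ⟨x, hg⟩ = f.toHom ⟨x, hf⟩ :=
  h.2 ⟨x, hf⟩

theorem exists_hom_of_monotone {ι : Type*} [Preorder ι] [IsDirectedOrder ι] [Nonempty ι]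
    {F : ι → PartialHom L M N} (hF : Monotone F) (hcover : ∀ x, ∃ i, x ∈ (F i).dom) :
    ∃ g : M →[L] N, ∀ i (x : (F i).dom), g x = (F i).toHom x := by
  choose idx hidx using hcover
  let g (x : M) : N := (F (idx x)).toHom ⟨x, hidx x⟩
  have hg (i : ι) (x : (F i).dom) : g x = (F i).toHom x := by
    obtain ⟨j, hxj, hij⟩ := exists_ge_ge (idx x) i
    exact (toHom_apply_of_le (hF hxj) (hidx x) (dom_mono (hF hij) x.2)).symm.trans
      (toHom_apply_of_le (hF hij) x.2 _)
  have hfinite {n : ℕ} (x : Fin n → M) : ∃ i, ∀ k, x k ∈ (F i).dom := by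
    obtain ⟨i, hi⟩ := Finite.exists_le fun k => idx (x k)
    exact ⟨i, fun k => dom_mono (hF (hi k)) (hidx (x k))⟩
  refine ⟨⟨g, fun {n} f x => ?_, fun {n} R x hR => ?_⟩, hg⟩
  · obtain ⟨i, hi⟩ := hfinite x
    let y (k : Fin n) : (F i).dom := ⟨x k, hi k⟩
    calc g (funMap f x) = (F i).toHom (funMap f y) := hg i (funMap f y)
      _ = funMap f ((F i).toHom ∘ y) := (F i).toHom.map_fun f y
      _ = funMap f (g ∘ x) := congrArg _ (funext fun k => (hg i (y k)).symm)
  · obtain ⟨i, hi⟩ := hfinite x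
    let y (k : Fin n) : (F i).dom := ⟨x k, hi k⟩
    have hgy : g ∘ x = (F i).toHom ∘ y := funext fun k => hg i (y k)
    rw [hgy]
    exact (F i).toHom.map_rel R y hR

end PartialHom

/-- The partial homomorphisms with finite domain, ordered by extension: the conditions of the
back-and-forth construction. -/
abbrev FinitePartialHom (L : FirstOrder.Language.{u, v}) (M N : Type*) [L.Structure M]
    [L.Structure N] :=
  {f : PartialHom L M N // Finite f.dom}

namespace FinitePartialHom

variable {M N : Type*} [L.Structure M] [L.Structure N]

theorem exists_surjective_hom_of_isCofinal [Countable M] [Countable N]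
    (hdom : ∀ m : M, IsCofinal {f : FinitePartialHom L M N | m ∈ f.1.dom})
    (hrange : ∀ n : N, IsCofinal {f : FinitePartialHom L M N | n ∈ f.1.toHom.range})
    (p : FinitePartialHom L M N) :
    ∃ g : M →[L] N, Function.Surjective g ∧ ∀ x : p.1.dom, g x = p.1.toHom x := by
  have := Encodable.ofCountable M
  have := Encodable.ofCountable N
  let 𝒟 : M ⊕ N → Cofinal (FinitePartialHom L M N) :=
    Sum.elim (fun m => ⟨_, hdom m⟩) (fun n => ⟨_, hrange n⟩)
  let F (k : ℕ) : PartialHom L M N := (sequenceOfCofinals p 𝒟 k).1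
  have hF : Monotone F := fun _ _ h => sequenceOfCofinals.monotone p 𝒟 h
  have hF_dom (m : M) : ∃ k, m ∈ (F k).dom := ⟨_, sequenceOfCofinals.encode_mem p 𝒟 (.inl m)⟩
  have hF_range (n : N) : ∃ k, n ∈ (F k).toHom.range :=
    ⟨_, sequenceOfCofinals.encode_mem p 𝒟 (.inr n)⟩
  obtain ⟨g, hg⟩ := PartialHom.exists_hom_of_monotone hF hF_dom
  refine ⟨g, fun n => ?_, hg 0⟩
  obtain ⟨k, x, hx⟩ := hF_range n
  exact ⟨x, (hg k x).trans hx⟩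

end FinitePartialHom

section

variable {M : Type w} [L.Structure M]

namespace IsHEHomogeneous

theorem exists_surjective_extension (H : IsHEHomogeneous L M) {A : L.Substructure M} [Finite A]
    (f : A →[L] M) : ∃ g : M →[L] M, Function.Surjective g ∧ ∀ a : A, g a = f a :=
  H A f.range (Set.toFinite _) (finite_range_hom f) (f.codRestrict _ f.mem_range_self)

theorem hasHHEP (H : IsHEHomogeneous L M) : HasHHEP L M := by
  intro B _ _ ⟨e⟩ A f
  let φ := e.substructureEquivMap A
  have : Finite (A.map e.toHom) := Finite.of_equiv A φ.toEquiv
  obtain ⟨g, -, hg⟩ := H.exists_surjective_extension (f.comp φ.symm.toHom)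
  refine ⟨g.comp e.toHom, fun a => ?_⟩
  exact (hg (φ a)).trans (congrArg f (φ.symm_apply_apply a))

theorem hasAntiHHEP [L.IsRelational] (H : IsHEHomogeneous L M) : HasAntiHHEP L M := by
  intro B _ _ ⟨e⟩ A A' hA' h h_surj
  have : Finite A' := hA'
  obtain ⟨g, g_surj, hg⟩ :=
    H.exists_surjective_extension (e.toHom.comp (A.subtype.toHom.comp h))
  choose s hs using fun b : B => g_surj (e b)
  let B' : L.Substructure M := closure L (A' ∪ s '' (A : Set B)ᶜ)
  have mem_B' {x : M} : x ∈ B' ↔ x ∈ A' ∨ x ∈ s '' (A : Set B)ᶜ :=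
    mem_closure_iff_of_isRelational L _ x
  have hle : A' ≤ B' := fun x hx => mem_B'.2 (.inl hx)
  have hs_mem (b : B) (hb : b ∉ A) : s b ∈ B' := mem_B'.2 (.inr ⟨b, hb, rfl⟩)
  have hB' : (B' : Set M).Finite :=
    (fg_closure (hA'.union ((Set.toFinite _).image s))).finite
  have hg_range (x : B') : g x ∈ e.toHom.range := by
    rcases mem_B'.1 x.2 with hx | ⟨b, -, hbx⟩
    · exact ⟨h ⟨x, hx⟩, (hg ⟨x, hx⟩).symm⟩
    · exact ⟨b, by rw [← hbx]; exact (hs b).symm⟩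
  obtain ⟨h', hh'⟩ := exists_hom_lift_of_forall_mem_range e (g.domRestrict B') hg_range
  have h'_agrees (a : A') : h' (inclusion hle a) = h a := e.injective ((hh' _).trans (hg a))
  have h'_section (b : B) (hb : b ∉ A) : h' ⟨s b, hs_mem b hb⟩ = b :=
    e.injective ((hh' _).trans (hs b))
  refine ⟨B', hB', hle, h', fun b => ?_, h'_agrees, fun x hx => ?_⟩
  · by_cases hb : b ∈ A
    · obtain ⟨a, ha⟩ := h_surj ⟨b, hb⟩
      exact ⟨inclusion hle a, (h'_agrees a).trans (congrArg Subtype.val ha)⟩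
    · exact ⟨_, h'_section b hb⟩
  · obtain ⟨b, hb, hbx⟩ := (mem_B'.1 x.2).resolve_left hx
    obtain rfl : x = ⟨s b, hs_mem b hb⟩ := Subtype.ext hbx.symm
    rwa [h'_section b hb]

end IsHEHomogeneous

theorem HasHHEP.exists_extension_along_embedding (H : HasHHEP L M) {A : Type*} [L.Structure A]
    {B : Type w} [L.Structure B] [Finite B] (e : B ↪[L] M) (i : A ↪[L] B) (f : A →[L] M) :
    ∃ g : B →[L] M, ∀ a, g (i a) = f a := by
  obtain ⟨g, hg⟩ := H B ‹_› ⟨e⟩ i.toHom.range (f.comp i.equivRange.symm.toHom)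
  refine ⟨g, fun a => ?_⟩
  exact (hg (i.equivRange a)).trans (congrArg f (i.equivRange.symm_apply_apply a))

theorem HasHHEP.isCofinal_setOf_mem_dom (H : HasHHEP L M) (hM : IsLocallyFinite L M) (m : M) :
    IsCofinal {f : FinitePartialHom L M M | m ∈ f.1.dom} := by
  rintro ⟨f, hf⟩
  let B := f.dom ⊔ closure L {m}
  have hB : Finite B := hM.finite_sup_closure_singleton f.dom m
  have hle : f.dom ≤ B := le_sup_left
  obtain ⟨g, hg⟩ := H.exists_extension_along_embedding B.subtype (inclusion hle) f.toHom
  have hm : m ∈ B := le_sup_right (a := f.dom) (subset_closure rfl)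
  exact ⟨⟨⟨B, g⟩, hB⟩, hm, hle, hg⟩

theorem HasAntiHHEP.exists_surjective_extension (H : HasAntiHHEP L M) {A' : L.Substructure M}
    [Finite A'] {B : Type w} [L.Structure B] [Finite B] (e : B ↪[L] M) (f : A' →[L] B) :
    ∃ (B' : L.Substructure M) (_ : Finite B') (hle : A' ≤ B') (g : B' →[L] B),
      Function.Surjective g ∧ ∀ a, g (inclusion hle a) = f a := by
  have f_surj : Function.Surjective (f.codRestrict f.range f.mem_range_self) :=
    fun ⟨_, a, ha⟩ => ⟨a, Subtype.ext ha⟩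
  obtain ⟨B', hB', hle, g, g_surj, hg, -⟩ :=
    H B ‹_› ⟨e⟩ f.range A' (Set.toFinite _) _ f_surj
  exact ⟨B', hB', hle, g, g_surj, hg⟩

theorem HasAntiHHEP.isCofinal_setOf_mem_range (H : HasAntiHHEP L M) (hM : IsLocallyFinite L M)
    (m : M) : IsCofinal {f : FinitePartialHom L M M | m ∈ f.1.toHom.range} := by
  rintro ⟨f, hf⟩
  let B := f.toHom.range ⊔ closure L {m}
  have := finite_range_hom f.toHom
  have hB : Finite B := hM.finite_sup_closure_singleton f.toHom.range m
  have hf_mem (x : f.dom) : f.toHom x ∈ B :=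
    le_sup_left (b := closure L {m}) (f.toHom.mem_range_self x)
  have hm : m ∈ B := le_sup_right (a := f.toHom.range) (subset_closure rfl)
  obtain ⟨B', hB', hle, g, g_surj, hg⟩ :=
    H.exists_surjective_extension B.subtype (f.toHom.codRestrict B hf_mem)
  obtain ⟨x, hx⟩ := g_surj ⟨m, hm⟩
  exact ⟨⟨⟨B', B.subtype.toHom.comp g⟩, hB'⟩, ⟨x, congrArg Subtype.val hx⟩, hle,
    fun a => congrArg Subtype.val (hg a)⟩

theorem isHEHomogeneous_of_hasHHEP_of_hasAntiHHEP [Countable M] (hM : IsLocallyFinite L M)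
    (H : HasHHEP L M) (H' : HasAntiHHEP L M) : IsHEHomogeneous L M := fun A B hA _ f =>
  FinitePartialHom.exists_surjective_hom_of_isCofinal (H.isCofinal_setOf_mem_dom hM)
    (H'.isCofinal_setOf_mem_range hM) ⟨⟨A, B.subtype.toHom.comp f⟩, hA⟩

end

theorem he_homogeneous_iff_hhep_and_antiHHEP (L : FirstOrder.Language.{u, v}) [L.IsRelational]
    (M : Type w) [L.Structure M] [Countable M] :
    IsHEHomogeneous L M ↔ (HasHHEP L M ∧ HasAntiHHEP L M) :=
  ⟨fun H => ⟨H.hasHHEP, H.hasAntiHHEP⟩, fun ⟨H, H'⟩ =>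
    isHEHomogeneous_of_hasHHEP_of_hasAntiHHEP isLocallyFinite_of_isRelational H H'⟩
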